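/- Let F : 𝕋 → ℂ be absolutely continuous with Ḟ ∈ L¹(𝕋), and let f = P[F] be its Poisson integral. Then P[Ḟ](0) = 0 and for all z ∈ 𝔻, P[Ḟ](z) + i P̃[Ḟ](z) = 2 i z f_z(z), where P̃[Ḟ] is the conjugate Poisson integral of Ḟ. -/

import Mathlib

open MeasureTheory Complex Metric Set Filter
open scoped Real Topology ENNReal

noncomputable section

/-- The Poisson kernel `P(z) = (1-|z|^2)/|1-z|^2`. -/
def poissonKer (z : ℂ) : ℝ := (1 - ‖z‖ ^ 2) / ‖1 - z‖ ^ 2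

/-- The Poisson integral of a boundary function `F` defined on the unit circle. -/
def poissonInt (F : ℂ → ℂ) (z : ℂ) : ℂ :=
  (1 / (2 * π)) * ∫ t in (0:ℝ)..(2 * π),
    (poissonKer (z * Complex.exp (-(t : ℂ) * Complex.I)) : ℂ) *
      F (Complex.exp ((t : ℂ) * Complex.I))

/-- The Poisson integral of a (2π-periodic) function of the angular variable. -/
def poissonIntR (φ : ℝ → ℂ) (z : ℂ) : ℂ :=
  (1 / (2 * π)) * ∫ t in (0:ℝ)..(2 * π),
    (poissonKer (z * Complex.exp (-(t : ℂ) * Complex.I)) : ℂ) * φ t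

/-- The conjugate Poisson kernel `P̃(z) = Im((1+z)/(1-z))`. -/
def conjPoissonKer (z : ℂ) : ℝ := ((1 + z) / (1 - z)).im

/-- The conjugate Poisson integral of a function of the angular variable. -/
def conjPoissonIntR (φ : ℝ → ℂ) (z : ℂ) : ℂ :=
  (1 / (2 * π)) * ∫ t in (0:ℝ)..(2 * π),
    (conjPoissonKer (z * Complex.exp (-(t : ℂ) * Complex.I)) : ℂ) * φ t

/-- Wirtinger derivative `f_z = (1/2)(∂ₓ - i ∂_y) f`. -/
def wdz (f : ℂ → ℂ) (z : ℂ) : ℂ :=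
  (1 / 2) * (fderiv ℝ f z 1 - Complex.I * fderiv ℝ f z Complex.I)

/-- Wirtinger derivative `f_z̄ = (1/2)(∂ₓ + i ∂_y) f`. -/
def wdzb (f : ℂ → ℂ) (z : ℂ) : ℂ :=
  (1 / 2) * (fderiv ℝ f z 1 + Complex.I * fderiv ℝ f z Complex.I)

/-- The angular derivative `f_θ(z) = i (z f_z(z) - z̄ f_z̄(z))`. -/
def fTheta (f : ℂ → ℂ) (z : ℂ) : ℂ :=
  Complex.I * (z * wdz f z - (starRingEnd ℂ) z * wdzb f z)

/-- The radial derivative multiplied by `r`: `r f_r(z) = z f_z(z) + z̄ f_z̄(z)`. -/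
def rFr (f : ℂ → ℂ) (z : ℂ) : ℂ :=
  z * wdz f z + (starRingEnd ℂ) z * wdzb f z

/-- `F : 𝕋 → ℂ` is absolutely continuous with angular derivative `Ḟ = Fd`,
i.e. `t ↦ F(e^{it})` is an indefinite integral of the (locally integrable,
2π-periodic) function `Fd`. -/
def IsACDeriv (F : ℂ → ℂ) (Fd : ℝ → ℂ) : Prop :=
  (∀ a b : ℝ, IntervalIntegrable Fd MeasureTheory.volume a b) ∧
  Function.Periodic Fd (2 * π) ∧
  ∀ t : ℝ, F (Complex.exp ((t : ℂ) * Complex.I)) = F 1 + ∫ s in (0:ℝ)..t, Fd s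

/-- membership in `L^p(𝕋)`, identifying `𝕋` with `[0, 2π)`. -/
def MemLpT (p : ℝ≥0∞) (φ : ℝ → ℂ) : Prop :=
  MeasureTheory.MemLp φ p (MeasureTheory.volume.restrict (Ioc (0:ℝ) (2 * π)))

/-- The integral mean `M_p(r, g)`. -/
def Mp (p : ℝ) (g : ℂ → ℂ) (r : ℝ) : ℝ :=
  ((1 / (2 * π)) * ∫ θ in (0:ℝ)..(2 * π),
      ‖g ((r : ℂ) * Complex.exp ((θ : ℂ) * Complex.I))‖ ^ p) ^ (1 / p)

/-- The `L^p(𝕋)` norm `((1/2π) ∫ |φ|^p)^{1/p}`. -/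
def lpNormT (p : ℝ) (φ : ℝ → ℂ) : ℝ :=
  ((1 / (2 * π)) * ∫ t in (0:ℝ)..(2 * π), ‖φ t‖ ^ p) ^ (1 / p)

/-- Membership in the analytic Hardy space `H^p(𝔻)` for `p ∈ [1, ∞)`. -/
def MemHp (p : ℝ) (g : ℂ → ℂ) : Prop :=
  DifferentiableOn ℂ g (ball (0:ℂ) 1) ∧ ∃ M : ℝ, ∀ r ∈ Ioo (0:ℝ) 1, Mp p g r ≤ M

/-- Membership in `H^∞(𝔻)`: bounded analytic functions on the unit disk. -/
def MemHinf (g : ℂ → ℂ) : Prop :=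
  DifferentiableOn ℂ g (ball (0:ℂ) 1) ∧ ∃ M : ℝ, ∀ z ∈ ball (0:ℂ) 1, ‖g z‖ ≤ M

/-- Harmonicity on the unit disk: `f` is C² with vanishing Laplacian. -/
def HarmonicOnD (f : ℂ → ℂ) : Prop :=
  ContDiffOn ℝ 2 f (ball (0:ℂ) 1) ∧
  ∀ z ∈ ball (0:ℂ) 1,
    fderiv ℝ (fun w => fderiv ℝ f w 1) z 1
      + fderiv ℝ (fun w => fderiv ℝ f w Complex.I) z Complex.I = 0

/-- Membership in the harmonic Hardy space `h^p(𝔻)` for `p ∈ [1, ∞)`. -/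
def Memhp (p : ℝ) (g : ℂ → ℂ) : Prop :=
  HarmonicOnD g ∧ ∃ M : ℝ, ∀ r ∈ Ioo (0:ℝ) 1, Mp p g r ≤ M

/-- Membership in `h^∞(𝔻)`: bounded harmonic functions on the unit disk. -/
def Memhinf (g : ℂ → ℂ) : Prop :=
  HarmonicOnD g ∧ ∃ M : ℝ, ∀ z ∈ ball (0:ℂ) 1, ‖g z‖ ≤ M

/-- `L` is the value of the principal-value Hilbert transform
`(1/2π) p.v. ∫ φ(t)/tan((θ-t)/2) dt` of (the 2π-periodic) `φ` at `θ`. -/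
def IsPVHilbert (φ : ℝ → ℂ) (θ : ℝ) (L : ℂ) : Prop :=
  Filter.Tendsto
    (fun ε : ℝ => (1 / (2 * π)) *
      ∫ t in Ioo (θ - π) (θ + π) \ Ioo (θ - ε) (θ + ε),
        φ t / (Real.tan ((θ - t) / 2) : ℂ))
    (nhdsWithin 0 (Ioi 0)) (nhds L)

/-!
The kernel `P + i P̃` is the Herglotz kernel `(ζ + z) / (ζ - z)`, `ζ = e^{it}`, so
`P[Ḟ] + i P̃[Ḟ]` is the Herglotz integral `H[Ḟ]`, while `P[F] = (H[F] + conj H[conj F]) / 2`.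
Since `H[F]` and `H[conj F]` are holomorphic, `f_z = H[F]' / 2`, and it remains to see that
`H[Ḟ](z) = i z H[F]'(z)`. The kernel depends on `z e^{-it}` only, so its `t`-derivative is
`-i z` times its `z`-derivative, and the identity is an integration by parts on the circle; as
`Ḟ` is merely integrable, this takes place within absolutely continuous functions.
-/

open scoped ComplexConjugate

section AbsolutelyContinuous

variable {E : Type*} [NormedAddCommGroup E] [NormedSpace ℝ E] {a b : ℝ}

theorem absolutelyContinuousOnInterval_integral {f : ℝ → E} {c : ℝ}
    (hf : IntervalIntegrable f volume a b) (hc : c ∈ uIcc a b) :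
    AbsolutelyContinuousOnInterval (fun x ↦ ∫ t in c..x, f t) a b := by
  have integrable_of_mem {x y : ℝ} (hx : x ∈ uIcc a b) (hy : y ∈ uIcc a b) :
      IntervalIntegrable f volume x y := hf.mono_set (uIcc_subset_uIcc hx hy)
  have dist_le {x y : ℝ} (hx : x ∈ uIcc a b) (hy : y ∈ uIcc a b) :
      dist (∫ t in c..x, f t) (∫ t in c..y, f t) ≤
        dist (∫ t in c..x, ‖f t‖) (∫ t in c..y, ‖f t‖) := by
    have hcx := integrable_of_mem hc hx
    have hcy := integrable_of_mem hc hy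
    rw [dist_eq_norm, dist_eq_norm, intervalIntegral.integral_interval_sub_left hcx hcy,
      intervalIntegral.integral_interval_sub_left hcx.norm hcy.norm, Real.norm_eq_abs]
    exact intervalIntegral.norm_integral_le_abs_integral_norm
  have hnorm := hf.norm.absolutelyContinuousOnInterval_intervalIntegral hc
  rw [absolutelyContinuousOnInterval_iff] at hnorm ⊢
  intro ε hε
  obtain ⟨δ, hδ, hsum⟩ := hnorm ε hε
  refine ⟨δ, hδ, fun I hI hlen ↦ (Finset.sum_le_sum fun i hi ↦ ?_).trans_lt (hsum I hI hlen)⟩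
  exact dist_le (hI.1 i hi).1 (hI.1 i hi).2

theorem integral_eq_sub_of_absolutelyContinuousOnInterval [CompleteSpace E] {f f' : ℝ → E}
    (hf : AbsolutelyContinuousOnInterval f a b)
    (hderiv : ∀ᵐ t, t ∈ uIcc a b → HasDerivAt f (f' t) t)
    (hf' : IntervalIntegrable f' volume a b) :
    ∫ t in a..b, f' t = f b - f a := by
  have hac : AbsolutelyContinuousOnInterval (fun x ↦ f x - ∫ t in a..x, f' t) a b :=
    hf.fun_sub (absolutelyContinuousOnInterval_integral hf' left_mem_uIcc)
  obtain ⟨C, hC⟩ := hac.const_of_ae_hasDerivAt_zero <| by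
    filter_upwards [hderiv, hf'.ae_hasDerivAt_integral] with t hft hIt ht
    simpa using (hft ht).fun_sub (hIt ht a left_mem_uIcc)
  have heq : f b - ∫ t in a..b, f' t = f a - ∫ t in a..a, f' t :=
    (hC b right_mem_uIcc).trans (hC a left_mem_uIcc).symm
  rw [intervalIntegral.integral_same, sub_zero] at heq
  rw [← heq, sub_sub_cancel]

theorem integral_smul_eq_sub_of_absolutelyContinuousOnInterval [CompleteSpace E]
    {𝕜 : Type*} [NontriviallyNormedField 𝕜] [NormedAlgebra ℝ 𝕜] [NormedSpace 𝕜 E]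
    [IsScalarTower ℝ 𝕜 E] {u u' : ℝ → 𝕜} {v v' : ℝ → E}
    (hu : AbsolutelyContinuousOnInterval u a b) (hv : AbsolutelyContinuousOnInterval v a b)
    (huu' : ∀ᵐ t, t ∈ uIcc a b → HasDerivAt u (u' t) t)
    (hvv' : ∀ᵐ t, t ∈ uIcc a b → HasDerivAt v (v' t) t)
    (hu' : IntervalIntegrable u' volume a b) (hv' : IntervalIntegrable v' volume a b) :
    ∫ t in a..b, u t • v' t = u b • v b - u a • v a - ∫ t in a..b, u' t • v t := by
  have huv' : IntervalIntegrable (fun t ↦ u t • v' t) volume a b :=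
    hv'.continuousOn_smul hu.continuousOn
  have hu'v : IntervalIntegrable (fun t ↦ u' t • v t) volume a b :=
    hu'.smul_continuousOn hv.continuousOn
  rw [eq_sub_iff_add_eq, ← intervalIntegral.integral_add huv' hu'v]
  refine integral_eq_sub_of_absolutelyContinuousOnInterval (hu.fun_smul hv) ?_ (huv'.add hu'v)
  filter_upwards [huu', hvv'] with t hut hvt ht using (hut ht).smul (hvt ht)

end AbsolutelyContinuous

namespace IsACDeriv

variable {F : ℂ → ℂ} {Fd : ℝ → ℂ}

theorem absolutelyContinuousOnInterval (hF : IsACDeriv F Fd) {a b : ℝ} (h0 : 0 ∈ uIcc a b) :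
    AbsolutelyContinuousOnInterval (fun t : ℝ ↦ F (exp (t * I))) a b := by
  simp only [hF.2.2]
  have hconst : AbsolutelyContinuousOnInterval (fun _ : ℝ ↦ F 1) a b :=
    contDiffOn_const.absolutelyContinuousOnInterval
  exact hconst.fun_add (absolutelyContinuousOnInterval_integral (hF.1 a b) h0)

theorem ae_hasDerivAt (hF : IsACDeriv F Fd) :
    ∀ᵐ t : ℝ, HasDerivAt (fun t : ℝ ↦ F (exp (t * I))) (Fd t) t := by
  simp only [hF.2.2]
  have hloc : LocallyIntegrable Fd := fun t ↦
    ⟨Ioc (t - 1) (t + 1), Ioc_mem_nhds (by linarith) (by linarith), (hF.1 (t - 1) (t + 1)).1⟩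
  filter_upwards [_root_.LocallyIntegrable.ae_hasDerivAt_integral hloc] with t ht
  exact (ht 0).const_add (F 1)

theorem circleIntegrable (hF : IsACDeriv F Fd) : CircleIntegrable F 0 1 := by
  have hcont := (hF.absolutelyContinuousOnInterval (a := 0) (b := 2 * π) left_mem_uIcc).continuousOn
  simpa [CircleIntegrable, circleMap] using hcont.intervalIntegrable

theorem integral_eq_zero (hF : IsACDeriv F Fd) : ∫ t in (0 : ℝ)..(2 * π), Fd t = 0 := by
  simpa using hF.2.2 (2 * π)

end IsACDeriv

section Wirtinger

variable {f g h : ℂ → ℂ} {z : ℂ}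

theorem wdz_congr (hfg : f =ᶠ[𝓝 z] g) : wdz f z = wdz g z := by
  simp only [wdz, hfg.fderiv_eq]

theorem wdz_add_conj (hg : DifferentiableAt ℂ g z) (hh : DifferentiableAt ℂ h z) :
    wdz (fun w ↦ g w + conj (h w)) z = deriv g z := by
  have hg' := hg.hasDerivAt.hasFDerivAt.restrictScalars ℝ
  have hh' := conjCLE.hasFDerivAt.comp z (hh.hasDerivAt.hasFDerivAt.restrictScalars ℝ)
  have hfderiv (v : ℂ) : fderiv ℝ (fun w ↦ g w + conj (h w)) z v =
      v * deriv g z + conj (v * deriv h z) :=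
    DFunLike.congr_fun (hg'.add hh').fderiv v
  rw [wdz, hfderiv, hfderiv, map_mul, map_mul, conj_I, map_one]
  linear_combination (-(deriv g z) / 2 + conj (deriv h z) / 2) * I_sq

end Wirtinger

theorem one_add_div_one_sub_eq_herglotzRieszKernel (z : ℂ) (t : ℝ) :
    (1 + z * exp (-t * I)) / (1 - z * exp (-t * I)) = herglotzRieszKernel 0 z (exp (t * I)) := by
  rw [herglotzRieszKernel, sub_zero, sub_zero, neg_mul, exp_neg]
  have := exp_ne_zero (t * I)
  field_simp

theorem poissonKer_eq_re (w : ℂ) : poissonKer w = ((1 + w) / (1 - w)).re := by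
  simpa [poissonKernel, herglotzRieszKernel, poissonKer] using
    congrFun (poissonKernel_eq_re_herglotzRieszKernel (c := 0) (w := w)) 1

theorem exp_mul_I_ne_of_mem_ball {z : ℂ} (hz : z ∈ ball (0 : ℂ) 1) (t : ℝ) : exp (t * I) ≠ z :=
  fun h ↦ by simp [← h] at hz

theorem hasDerivAt_herglotzRieszKernel_exp {z : ℂ} {t : ℝ} (hz : exp (t * I) ≠ z) :
    HasDerivAt (fun s : ℝ ↦ herglotzRieszKernel 0 z (exp (s * I)))
      (-(I * z) * (2 * exp (t * I) / (exp (t * I) - z) ^ 2)) t := by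
  have hexp : HasDerivAt (fun s : ℝ ↦ exp (s * I)) (exp (t * I) * I) t := by
    simpa using ((hasDerivAt_id t).ofReal_comp.mul_const I).cexp
  simp only [herglotzRieszKernel, sub_zero]
  refine ((hexp.add_const z).fun_div (hexp.sub_const z) (sub_ne_zero.2 hz)).congr_deriv ?_
  ring

theorem contDiff_herglotzRieszKernel_exp {n : WithTop ℕ∞} {z : ℂ}
    (hz : ∀ t : ℝ, exp (t * I) ≠ z) :
    ContDiff ℝ n fun t : ℝ ↦ herglotzRieszKernel 0 z (exp (t * I)) := by
  simp only [herglotzRieszKernel, sub_zero, div_eq_mul_inv]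
  have hexp : ContDiff ℝ n fun t : ℝ ↦ exp (t * I) :=
    (ofRealCLM.contDiff.mul contDiff_const).cexp
  exact (hexp.add contDiff_const).mul ((hexp.sub contDiff_const).inv fun t ↦ sub_ne_zero.2 (hz t))

/-- The Herglotz integral `H[φ](z) = (1/2π) ∫ (e^{it} + z) / (e^{it} - z) φ(t) dt` of a function of
the angular variable. It is the holomorphic function `P[φ] + i P̃[φ]`. -/
def herglotzIntR (φ : ℝ → ℂ) (z : ℂ) : ℂ :=
  (1 / (2 * π)) * ∫ t in (0 : ℝ)..(2 * π), herglotzRieszKernel 0 z (exp (t * I)) * φ t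

theorem poissonIntR_add_I_mul_conjPoissonIntR {φ : ℝ → ℂ} {z : ℂ}
    (hφ : IntervalIntegrable φ volume 0 (2 * π)) (hz : z ∈ ball (0 : ℂ) 1) :
    poissonIntR φ z + I * conjPoissonIntR φ z = herglotzIntR φ z := by
  have hker := (contDiff_herglotzRieszKernel_exp (n := 0) (exp_mul_I_ne_of_mem_ball hz)).continuous
  have hre := hφ.continuousOn_mul (continuous_ofReal.comp (continuous_re.comp hker)).continuousOn
  have him := hφ.continuousOn_mul (continuous_ofReal.comp (continuous_im.comp hker)).continuousOn
  simp only [Function.comp_apply] at hre him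
  simp only [poissonIntR, conjPoissonIntR, herglotzIntR, poissonKer_eq_re, conjPoissonKer,
    one_add_div_one_sub_eq_herglotzRieszKernel]
  rw [mul_left_comm, ← mul_add, ← intervalIntegral.integral_const_mul,
    ← intervalIntegral.integral_add hre (him.const_mul I)]
  congr! 3 with t
  nth_rw 3 [← re_add_im (herglotzRieszKernel 0 z (exp (t * I)))]
  ring

theorem conj_herglotzIntR_conj (φ : ℝ → ℂ) (z : ℂ) :
    conj (herglotzIntR (fun t ↦ conj (φ t)) z) =
      (1 / (2 * π)) * ∫ t in (0 : ℝ)..(2 * π),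
        conj (herglotzRieszKernel 0 z (exp (t * I))) * φ t := by
  simp [herglotzIntR, ← intervalIntegral.intervalIntegral_conj, Complex.conj_ofNat]

theorem poissonIntR_eq_herglotzIntR_add_conj {φ : ℝ → ℂ} {z : ℂ}
    (hφ : IntervalIntegrable φ volume 0 (2 * π)) (hz : z ∈ ball (0 : ℂ) 1) :
    poissonIntR φ z = herglotzIntR φ z / 2 +
      conj (herglotzIntR (fun t ↦ conj (φ t)) z / 2) := by
  have hker := (contDiff_herglotzRieszKernel_exp (n := 0) (exp_mul_I_ne_of_mem_ball hz)).continuous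
  have hint := hφ.continuousOn_mul hker.continuousOn
  have hint_conj : IntervalIntegrable
      (fun t ↦ conj (herglotzRieszKernel 0 z (exp (t * I))) * φ t) volume 0 (2 * π) :=
    hφ.continuousOn_mul (continuous_conj.comp hker).continuousOn
  rw [map_div₀, Complex.conj_ofNat, conj_herglotzIntR_conj, herglotzIntR, poissonIntR, ← add_div,
    ← mul_add, ← intervalIntegral.integral_add hint hint_conj, mul_div_assoc,
    ← intervalIntegral.integral_div]
  congr! 3
  rw [poissonKer_eq_re, one_add_div_one_sub_eq_herglotzRieszKernel, re_eq_add_conj]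
  ring

theorem hasDerivAt_herglotzIntR_exp {F : ℂ → ℂ} {z : ℂ} (hF : CircleIntegrable F 0 1)
    (hz : z ∈ ball (0 : ℂ) 1) :
    HasDerivAt (herglotzIntR fun t ↦ F (exp (t * I)))
      ((1 / (2 * π)) *
        ∫ t in (0 : ℝ)..(2 * π), 2 * exp (t * I) / (exp (t * I) - z) ^ 2 * F (exp (t * I))) z := by
  unfold herglotzIntR
  simpa [Real.circleAverage, circleMap] using
    hasDerivAt_circleAverage_herglotzRieszKernel_smul hF hz

theorem wdz_poissonInt {F : ℂ → ℂ} {z : ℂ} (hF : CircleIntegrable F 0 1)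
    (hz : z ∈ ball (0 : ℂ) 1) :
    wdz (poissonInt F) z = deriv (herglotzIntR fun t ↦ F (exp (t * I))) z / 2 := by
  have hF_conj : CircleIntegrable (fun ζ ↦ conj (F ζ)) 0 1 :=
    ⟨conjCLE.toContinuousLinearMap.integrable_comp hF.1,
      conjCLE.toContinuousLinearMap.integrable_comp hF.2⟩
  have hsplit : poissonInt F =ᶠ[𝓝 z] fun w ↦ herglotzIntR (fun t ↦ F (exp (t * I))) w / 2 +
      conj (herglotzIntR (fun t ↦ conj (F (exp (t * I)))) w / 2) := by
    filter_upwards [isOpen_ball.mem_nhds hz] with w hw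
    refine poissonIntR_eq_herglotzIntR_add_conj ?_ hw
    simpa [CircleIntegrable, circleMap] using hF
  rw [wdz_congr hsplit, wdz_add_conj, deriv_div_const]
  · exact (hasDerivAt_herglotzIntR_exp hF hz).differentiableAt.div_const 2
  · exact (hasDerivAt_herglotzIntR_exp hF_conj hz).differentiableAt.div_const 2

theorem IsACDeriv.herglotzIntR_eq {F : ℂ → ℂ} {Fd : ℝ → ℂ} {z : ℂ} (hF : IsACDeriv F Fd)
    (hz : z ∈ ball (0 : ℂ) 1) :
    herglotzIntR Fd z = I * z * deriv (herglotzIntR fun t ↦ F (exp (t * I))) z := by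
  set k : ℝ → ℂ := fun t ↦ herglotzRieszKernel 0 z (exp (t * I))
  set k' : ℝ → ℂ := fun t ↦ 2 * exp (t * I) / (exp (t * I) - z) ^ 2
  have hderiv : ∀ t, HasDerivAt k (-(I * z) * k' t) t := fun t ↦
    hasDerivAt_herglotzRieszKernel_exp (exp_mul_I_ne_of_mem_ball hz t)
  have hcont := contDiff_herglotzRieszKernel_exp (n := 1) (exp_mul_I_ne_of_mem_ball hz)
  have hcont_deriv : Continuous fun t ↦ -(I * z) * k' t :=
    (hcont.continuous_deriv le_rfl).congr fun t ↦ (hderiv t).deriv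
  have hparts := integral_smul_eq_sub_of_absolutelyContinuousOnInterval
    hcont.contDiffOn.absolutelyContinuousOnInterval
    (hF.absolutelyContinuousOnInterval left_mem_uIcc)
    (Eventually.of_forall fun t _ ↦ hderiv t) (hF.ae_hasDerivAt.mono fun t ht _ ↦ ht)
    (hcont_deriv.intervalIntegrable 0 (2 * π)) (hF.1 0 (2 * π))
  have hparts' : ∫ t in (0 : ℝ)..(2 * π), k t * Fd t =
      I * z * ∫ t in (0 : ℝ)..(2 * π), k' t * F (exp (t * I)) := by
    have hperiod : exp ((2 * π : ℝ) * I) = 1 := by push_cast; exact exp_two_pi_mul_I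
    simpa [-ofReal_mul, hperiod, mul_assoc, k] using hparts
  rw [(hasDerivAt_herglotzIntR_exp hF.circleIntegrable hz).deriv, herglotzIntR, hparts']
  ring

/-- For `F : 𝕋 → ℂ` absolutely continuous with `Ḟ ∈ L¹(𝕋)` and
`f = P[F]`: `P[Ḟ](0) = 0` and `P[Ḟ](z) + i P̃[Ḟ](z) = 2 i z f_z(z)` for all `z ∈ 𝔻`,
where `P̃[Ḟ]` is the conjugate Poisson integral of `Ḟ`. -/
theorem stmt11 (F : ℂ → ℂ) (Fd : ℝ → ℂ)
    (hF : IsACDeriv F Fd) (hL1 : MemLpT 1 Fd) :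
    poissonIntR Fd 0 = 0 ∧
    ∀ z ∈ ball (0:ℂ) 1,
      poissonIntR Fd z + Complex.I * conjPoissonIntR Fd z
        = 2 * Complex.I * z * wdz (poissonInt F) z := by
  refine ⟨by simp [poissonIntR, poissonKer, hF.integral_eq_zero], fun z hz ↦ ?_⟩
  calc poissonIntR Fd z + I * conjPoissonIntR Fd z
      = herglotzIntR Fd z := poissonIntR_add_I_mul_conjPoissonIntR (hF.1 0 (2 * π)) hz
    _ = I * z * deriv (herglotzIntR fun t ↦ F (exp (t * I))) z := hF.herglotzIntR_eq hz
    _ = 2 * I * z * wdz (poissonInt F) z := by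
      rw [wdz_poissonInt hF.circleIntegrable hz]
      ring

end
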